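/- Let R be a Noetherian ring and let I be an ideal of R. Let y ∈ I \ I^2 be such that (0 : y) ∩ I = 0 and, for some p ≥ 2, the Valabrega–Valla module VV_{(y)}(I)_{p-1} = ((y) ∩ I^{p-1})/(yI^{p-2}) is zero. Then there is a short exact sequence of R-modules 0 → E(I)_p → E(I/(y))_p → ((y) ∩ I^p)/(yI^{p-1}) → 0, where I/(y) is the image ideal of I in R/(y). In particular, if the initial form y* is a gr_I(R)-regular element, then E(I)_p ≅ E(I/(y))_p for all p ≥ 2 and rt(I) = rt(I/(y)). -/

import Mathlib

set_option synthInstance.maxHeartbeats 1000000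
set_option maxHeartbeats 1000000

open scoped TensorProduct
open PiTensorProduct

section SymDefs

variable (R : Type*) [CommRing R]

/-- The `n`-fold tensor power of (the `R`-module underlying) the ideal `I`. -/
abbrev TensPow (I : Ideal R) (n : ℕ) : Type _ := ⨂[R] (_ : Fin n), ↥I

/-- The multilinear "product" map `(v₁,…,vₙ) ↦ v₁⋯vₙ : Iⁿ ⊆ R`. -/
noncomputable def prodML (I : Ideal R) (n : ℕ) :
    MultilinearMap R (fun _ : Fin n => ↥I) R :=
  (MultilinearMap.mkPiAlgebra R (Fin n) R).compLinearMap fun _ => I.subtype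

/-- The symmetrizer relations in the `n`-th tensor power of `I`. -/
noncomputable def symRel (I : Ideal R) (n : ℕ) : Submodule R (TensPow R I n) :=
  Submodule.span R {z | ∃ (v : Fin n → ↥I) (σ : Equiv.Perm (Fin n)),
    z = tprod R v - tprod R (v ∘ σ)}

/-- The `n`-th symmetric power `Symⁿ(I)` of the ideal `I`, i.e. the `n`-th graded
component of the symmetric algebra of the `R`-module `I`. -/
abbrev SymPow (I : Ideal R) (n : ℕ) : Type _ := TensPow R I n ⧸ symRel R I n

/-- The `n`-th component `α_{I,n} : Symₙ(I) → Iⁿ ⊆ R` of the canonical morphism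
`α_I : Sym(I) → R(I)` (composed with the inclusion `Iⁿ ⊆ R`; it is an isomorphism
onto `Iⁿ` iff it is injective as a map to `R`). -/
noncomputable def alphaCan (I : Ideal R) (n : ℕ) : SymPow R I n →ₗ[R] R :=
  Submodule.liftQ (symRel R I n) (PiTensorProduct.lift (prodML R I n)) (by
    rw [symRel, Submodule.span_le]
    rintro z ⟨v, σ, rfl⟩
    simp only [SetLike.mem_coe, LinearMap.mem_ker, map_sub, PiTensorProduct.lift.tprod]
    have : prodML R I n (v ∘ σ) = prodML R I n v := by
      simp only [prodML, MultilinearMap.compLinearMap_apply,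
        MultilinearMap.mkPiAlgebra_apply, Function.comp_apply]
      exact Equiv.prod_comp σ fun i => ((v i : R))
    rw [this, sub_self])

end SymDefs

section EDefs

variable (R : Type*) [CommRing R]

/-- "Multiplication by `x`" map on tensor powers: `w ↦ x ⊗ w`. -/
noncomputable def consMap (I : Ideal R) (n : ℕ) (x : ↥I) :
    TensPow R I n →ₗ[R] TensPow R I (n + 1) :=
  PiTensorProduct.lift
    ((PiTensorProduct.tprod R (s := fun _ : Fin (n + 1) => ↥I)).curryLeft x)

/-- The submodule `Sym₁(I)·ker(α_{I,n}) ⊆ Sym_{n+1}(I)`. -/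
noncomputable def symOneMulKer (I : Ideal R) (n : ℕ) : Submodule R (SymPow R I (n + 1)) :=
  Submodule.span R {z | ∃ (x : ↥I) (w : TensPow R I n),
    (Submodule.Quotient.mk w : SymPow R I n) ∈ LinearMap.ker (alphaCan R I n) ∧
    z = Submodule.Quotient.mk (consMap R I n x w)}

/-- The module of effective relations `E(I)_{n+1} = ker(α_{I,n+1})/Sym₁(I)·ker(α_{I,n})`. -/
abbrev EffRel (I : Ideal R) (n : ℕ) : Type _ :=
  LinearMap.ker (alphaCan R I (n + 1)) ⧸
    Submodule.comap (LinearMap.ker (alphaCan R I (n + 1))).subtype (symOneMulKer R I n)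

end EDefs

section GrDefs

variable {R : Type*} [CommRing R]

/-- The ideal `I·R(I)` of the Rees algebra `R(I) = R[It] ⊆ R[t]`. -/
noncomputable def grIdeal (I : Ideal R) : Ideal (reesAlgebra I) :=
  Ideal.span ((algebraMap R (reesAlgebra I)) '' (I : Set R))

/-- The associated graded ring `gr_I(R) = ⊕ₙ Iⁿ/Iⁿ⁺¹`, realized as `R(I)/I·R(I)`. -/
abbrev GrRing (I : Ideal R) := reesAlgebra I ⧸ grIdeal I

end GrDefs

section VVDefs

variable {R : Type*} [CommRing R]

/-- The ideal `(y) ∩ Iᵖ`. -/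
noncomputable def vvCap (y : R) (I : Ideal R) (p : ℕ) : Ideal R :=
  Ideal.span {y} ⊓ I ^ p

end VVDefs


namespace Eff19

section Basic
variable {R S : Type*} [CommRing R] [CommRing S]

@[elab_as_elim]
theorem tp_induction {I : Ideal R} {n : ℕ} {P : TensPow R I n → Prop} (z : TensPow R I n)
    (h1 : ∀ (r : R) (v : Fin n → ↥I), P (r • tprod R v))
    (h2 : ∀ a b, P a → P b → P (a + b)) : P z :=
  PiTensorProduct.induction_on z h1 h2

/-- the product map on tensors -/
noncomputable def tau (I : Ideal R) (n : ℕ) : TensPow R I n →ₗ[R] R :=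
  PiTensorProduct.lift (prodML R I n)

theorem alpha_mk (I : Ideal R) (n : ℕ) (w : TensPow R I n) :
    alphaCan R I n (Submodule.Quotient.mk w) = tau I n w := rfl

theorem tau_tprod (I : Ideal R) (n : ℕ) (v : Fin n → ↥I) :
    tau I n (tprod R v) = ∏ i, (v i : R) := by
  simp [tau, prodML]

theorem cons_tprod (I : Ideal R) (n : ℕ) (x : ↥I) (v : Fin n → ↥I) :
    consMap R I n x (tprod R v) = tprod R (Fin.cons x v : Fin (n+1) → ↥I) := by
  simp [consMap]

theorem tau_cons (I : Ideal R) (n : ℕ) (x : ↥I) (w : TensPow R I n) :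
    tau I (n+1) (consMap R I n x w) = x * tau I n w := by
  refine tp_induction w ?_ ?_
  · intro r v
    rw [map_smul, map_smul, cons_tprod, tau_tprod, map_smul, tau_tprod, Fin.prod_univ_succ]
    simp only [Fin.cons_zero, Fin.cons_succ, smul_eq_mul]
    ring
  · intro a b ha hb
    simp only [map_add, ha, hb, mul_add]

theorem tau_mem (I : Ideal R) (n : ℕ) (w : TensPow R I n) : tau I n w ∈ I ^ n := by
  refine tp_induction w ?_ ?_
  · intro r v
    rw [map_smul, tau_tprod]
    refine Ideal.mul_mem_left _ _ ?_
    have := Ideal.prod_mem_prod (s := Finset.univ) (I := fun _ : Fin n => I) (x := fun i => (v i : R))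
      (fun i _ => (v i).2)
    simpa using this
  · intro a b ha hb
    rw [map_add]; exact add_mem ha hb

theorem tau_surj (I : Ideal R) (n : ℕ) : ∀ r ∈ I ^ n, ∃ w, tau I n w = r := by
  induction n with
  | zero =>
    intro r _
    refine ⟨r • tprod R (fun i => i.elim0), ?_⟩
    rw [map_smul, tau_tprod]; simp
  | succ n ih =>
    intro r hr
    rw [pow_succ'] at hr
    refine Submodule.mul_induction_on hr ?_ ?_
    · intro x hx s hs
      obtain ⟨w, hw⟩ := ih s hs
      exact ⟨consMap R I n ⟨x, hx⟩ w, by rw [tau_cons, hw]⟩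
    · rintro a b ⟨w, hw⟩ ⟨w', hw'⟩
      exact ⟨w + w', by rw [map_add, hw, hw']⟩

variable (π : R →+* S) (I : Ideal R)

/-- restriction of the ring map to the ideal -/
def resI (x : ↥I) : ↥(I.map π) := ⟨π x, Ideal.mem_map_of_mem π x.2⟩

theorem resI_add (x x' : ↥I) : resI π I (x + x') = resI π I x + resI π I x' := by
  ext; simp [resI]
theorem resI_smul (r : R) (x : ↥I) : resI π I (r • x) = π r • resI π I x := by
  ext; simp [resI]

theorem resI_surj (hπ : Function.Surjective π) : Function.Surjective (resI π I) := by
  rintro ⟨z, hz⟩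
  obtain ⟨x, hx, rfl⟩ := (Ideal.mem_map_iff_of_surjective π hπ).1 hz
  exact ⟨⟨x, hx⟩, rfl⟩

theorem comp_update {n : ℕ} {A B : Type*} [DecidableEq (Fin n)] (f : A → B) (v : Fin n → A) (i : Fin n) (x : A) :
    (fun j => f (Function.update v i x j)) = Function.update (fun j => f (v j)) i (f x) := by
  ext j
  by_cases h : j = i
  · subst h; simp
  · simp [h]

noncomputable def PhiAdd (n : ℕ) : TensPow R I n →+ TensPow S (I.map π) n :=
  PiTensorProduct.liftAddHom
    (fun f : R × (Fin n → ↥I) => π f.1 • tprod S (fun i => resI π I (f.2 i)))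
    (by
      intro r f i h
      have : tprod S (fun i => resI π I (f i)) = 0 := by
        refine MultilinearMap.map_coord_zero _ i ?_
        ext; simp [resI, h]
      simp [this])
    (by intro f; simp)
    (by
      intro _ r f i a b
      simp only [comp_update, resI_add]
      rw [MultilinearMap.map_update_add, smul_add])
    (by intro r r' f; simp [add_smul])
    (by
      intro _ r f i r'
      simp only [comp_update, resI_smul]
      rw [MultilinearMap.map_update_smul, Function.update_eq_self, smul_smul, map_mul, mul_comm])

theorem PhiAdd_smul_tprod (n : ℕ) (r : R) (v : Fin n → ↥I) :
    PhiAdd π I n (r • tprod R v) = π r • tprod S (fun i => resI π I (v i)) := by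
  rw [← tprodCoeff_eq_smul_tprod]; rfl

noncomputable def Phi (n : ℕ) : TensPow R I n →ₛₗ[π] TensPow S (I.map π) n where
  toFun := PhiAdd π I n
  map_add' := map_add _
  map_smul' := by
    intro r w
    refine tp_induction w ?_ ?_
    · intro r' v
      rw [smul_smul, PhiAdd_smul_tprod, PhiAdd_smul_tprod, map_mul, mul_smul]
    · intro a b ha hb
      rw [smul_add, map_add, map_add, ha, hb, smul_add]

theorem Phi_smul_tprod (n : ℕ) (r : R) (v : Fin n → ↥I) :
    Phi π I n (r • tprod R v) = π r • tprod S (fun i => resI π I (v i)) :=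
  PhiAdd_smul_tprod π I n r v

theorem Phi_tprod (n : ℕ) (v : Fin n → ↥I) :
    Phi π I n (tprod R v) = tprod S (fun i => resI π I (v i)) := by
  have := Phi_smul_tprod π I n 1 v
  simpa using this

theorem Phi_surj (hπ : Function.Surjective π) (n : ℕ) : Function.Surjective (Phi π I n) := by
  intro z
  refine tp_induction (P := fun z => ∃ a, Phi π I n a = z) z ?_ ?_
  · intro s v
    obtain ⟨r, rfl⟩ := hπ s
    choose u hu using fun i => resI_surj π I hπ (v i)
    exact ⟨r • tprod R u, by rw [Phi_smul_tprod]; simp only [hu]⟩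
  · rintro a b ⟨c, rfl⟩ ⟨d, rfl⟩
    exact ⟨c + d, map_add _ _ _⟩

theorem tau_Phi (n : ℕ) (w : TensPow R I n) :
    tau (I.map π) n (Phi π I n w) = π (tau I n w) := by
  refine tp_induction w ?_ ?_
  · intro r v
    rw [Phi_smul_tprod, map_smul, map_smul, tau_tprod, tau_tprod]
    simp [resI]
  · intro a b ha hb
    simp only [map_add, ha, hb]

theorem Phi_cons (n : ℕ) (x : ↥I) (w : TensPow R I n) :
    Phi π I (n+1) (consMap R I n x w) = consMap S (I.map π) n (resI π I x) (Phi π I n w) := by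
  refine tp_induction w ?_ ?_
  · intro r v
    rw [map_smul, cons_tprod, Phi_smul_tprod, Phi_smul_tprod, map_smul, cons_tprod]
    congr 2
    ext j
    refine Fin.cases ?_ (fun j => ?_) j <;> simp
  · intro a b ha hb
    simp only [map_add, ha, hb]

theorem cons_zero (n : ℕ) (w : TensPow R I n) : consMap R I n 0 w = 0 := by
  refine tp_induction w ?_ ?_
  · intro r v
    rw [map_smul, cons_tprod, MultilinearMap.map_coord_zero _ 0 (by simp), smul_zero]
  · intro a b ha hb
    simp only [map_add, ha, hb, add_zero]

theorem Phi_cons_zero (n : ℕ) (x : ↥I) (hx : π x = 0) (w : TensPow R I n) :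
    Phi π I (n+1) (consMap R I n x w) = 0 := by
  rw [Phi_cons]
  have : resI π I x = 0 := by ext; simp [resI, hx]
  rw [this, cons_zero]

theorem Phi_symRel (n : ℕ) (w : TensPow R I n) (hw : w ∈ symRel R I n) :
    Phi π I n w ∈ symRel S (I.map π) n := by
  have : symRel R I n ≤ (symRel S (I.map π) n).comap (Phi π I n) := by
    rw [symRel, Submodule.span_le]
    rintro z ⟨v, σ, rfl⟩
    simp only [SetLike.mem_coe, Submodule.mem_comap, map_sub, Phi_tprod]
    exact Submodule.subset_span ⟨_, σ, rfl⟩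
  exact this hw

theorem symRel_lift (hπ : Function.Surjective π) (n : ℕ) (z : TensPow S (I.map π) n)
    (hz : z ∈ symRel S (I.map π) n) : ∃ w ∈ symRel R I n, Phi π I n w = z := by
  rw [symRel] at hz
  induction hz using Submodule.span_induction with
  | mem x h =>
    obtain ⟨v, σ, rfl⟩ := h
    choose u hu using fun i => resI_surj π I hπ (v i)
    refine ⟨tprod R u - tprod R (u ∘ σ), Submodule.subset_span ⟨u, σ, rfl⟩, ?_⟩
    simp only [map_sub, Phi_tprod, Function.comp_apply, hu]
    rfl
  | zero => exact ⟨0, zero_mem _, map_zero _⟩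
  | add a b _ _ ha hb =>
    obtain ⟨c, hc, rfl⟩ := ha
    obtain ⟨d, hd, rfl⟩ := hb
    exact ⟨c + d, add_mem hc hd, map_add _ _ _⟩
  | smul s a _ ha =>
    obtain ⟨c, hc, rfl⟩ := ha
    obtain ⟨r, rfl⟩ := hπ s
    exact ⟨r • c, Submodule.smul_mem _ _ hc, LinearMap.map_smulₛₗ _ _ _⟩

/-- symmetric relations together with multiples of `Y` -/
noncomputable def Nsub (n : ℕ) (Y : ↥I) : Submodule R (TensPow R I (n+1)) :=
  symRel R I (n+1) ⊔ LinearMap.range (consMap R I n Y)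

theorem tprod_mem_N (n : ℕ) (Y : ↥I) (hk : ∀ r, π r = 0 → ∃ a, r = a * (Y : R))
    (v : Fin (n+1) → ↥I) (i : Fin (n+1)) (hv : π (v i) = 0) :
    tprod R v ∈ Nsub I n Y := by
  obtain ⟨a, ha⟩ := hk _ hv
  have hvi : v i = a • Y := by ext; simpa using ha
  have h1 : tprod R v = a • tprod R (Function.update v i Y) := by
    rw [← MultilinearMap.map_update_smul, ← hvi, Function.update_eq_self]
  rw [h1]
  refine Submodule.smul_mem _ _ ?_
  set u := Function.update v i Y with hu
  have h2 : tprod R u - tprod R (u ∘ Equiv.swap 0 i) ∈ Nsub I n Y :=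
    Submodule.mem_sup_left (Submodule.subset_span ⟨u, _, rfl⟩)
  have h3 : tprod R (u ∘ Equiv.swap 0 i) ∈ Nsub I n Y := by
    refine Submodule.mem_sup_right ⟨tprod R (Fin.tail (u ∘ Equiv.swap 0 i)), ?_⟩
    rw [cons_tprod]
    congr 1
    have : Y = (u ∘ Equiv.swap 0 i) 0 := by simp [hu]
    conv_lhs => rw [this]
    exact Fin.cons_self_tail _
  have := add_mem h2 h3
  simpa using this

theorem smul_tprod_mem_N (n : ℕ) (Y : ↥I) (hk : ∀ r, π r = 0 → ∃ a, r = a * (Y : R))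
    (v : Fin (n+1) → ↥I) (r : R) (hr : π r = 0) :
    r • tprod R v ∈ Nsub I n Y := by
  have h1 : r • tprod R v = tprod R (Function.update v 0 (r • v 0)) := by
    rw [MultilinearMap.map_update_smul, Function.update_eq_self]
  rw [h1]
  refine tprod_mem_N π I n Y hk _ 0 ?_
  simp [hr]

theorem tprod_sub_mem_N (n : ℕ) (Y : ↥I) (hk : ∀ r, π r = 0 → ∃ a, r = a * (Y : R))
    (v v' : Fin (n+1) → ↥I) (h : ∀ i, π (v i) = π (v' i)) :
    tprod R v - tprod R v' ∈ Nsub I n Y := by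
  have h1 : v = v' + (v - v') := by abel
  rw [h1, MultilinearMap.map_add_univ, ← Finset.add_sum_erase _ _ (Finset.mem_univ Finset.univ)]
  rw [Finset.piecewise_univ, add_sub_cancel_left]
  refine Submodule.sum_mem _ ?_
  intro s hs
  have hs' : s ≠ Finset.univ := (Finset.mem_erase.1 hs).1
  obtain ⟨i, hi⟩ : ∃ i, i ∉ s := by
    by_contra hcon
    push Not at hcon
    exact hs' (Finset.eq_univ_iff_forall.2 hcon)
  refine tprod_mem_N π I n Y hk _ i ?_
  rw [Finset.piecewise_eq_of_notMem _ _ _ hi]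
  simp [h i]

theorem smul_tprod_sub_mem_N (n : ℕ) (Y : ↥I) (hk : ∀ r, π r = 0 → ∃ a, r = a * (Y : R))
    (hY : π Y = 0)
    (v v' : Fin (n+1) → ↥I) (h : ∀ i, π (v i) = π (v' i)) (r r' : R) (hr : π r = π r') :
    r • tprod R v - r' • tprod R v' ∈ Nsub I n Y := by
  have h1 : r • tprod R v - r' • tprod R v' =
    (r - r') • tprod R v + r' • (tprod R v - tprod R v') := by
      have e1 : (r - r') • tprod R v = r • tprod R v - r' • tprod R v :=
        eq_sub_of_add_eq (by rw [← add_smul, sub_add_cancel])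
      have e2 : r' • (tprod R v - tprod R v') = r' • tprod R v - r' • tprod R v' := smul_sub r' _ _
      rw [e1, e2]; abel
  rw [h1]
  refine add_mem (smul_tprod_mem_N π I n Y hk _ _ (by simp [hr]))
    (Submodule.smul_mem _ _ (tprod_sub_mem_N π I n Y hk _ _ h))

theorem exists_psi (hπ : Function.Surjective π) (n : ℕ) (Y : ↥I)
    (hk : ∀ r, π r = 0 → ∃ a, r = a * (Y : R)) (hY : π Y = 0) :
    ∃ ψ : TensPow S (I.map π) (n+1) →+ (TensPow R I (n+1) ⧸ Nsub I n Y),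
      ∀ w, ψ (Phi π I (n+1) w) = Submodule.Quotient.mk w := by
  choose l hl using hπ
  choose L hL using resI_surj π I (fun s => ⟨l s, hl s⟩)
  have hL' : ∀ x, π (L x) = x := fun x => congrArg Subtype.val (hL x)
  have key : ∀ (v v' : Fin (n+1) → ↥I) (h : ∀ i, π (v i) = π (v' i)) (r r' : R)
      (hr : π r = π r'), (Submodule.Quotient.mk (r • tprod R v) : TensPow R I (n+1) ⧸ Nsub I n Y)
        = Submodule.Quotient.mk (r' • tprod R v') := by
    intro v v' h r r' hr
    rw [Submodule.Quotient.eq]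
    exact smul_tprod_sub_mem_N π I n Y hk hY v v' h r r' hr
  let ψ : TensPow S (I.map π) (n+1) →+ (TensPow R I (n+1) ⧸ Nsub I n Y) :=
    PiTensorProduct.liftAddHom
      (fun f : S × (Fin (n+1) → ↥(I.map π)) =>
        Submodule.Quotient.mk (l f.1 • tprod R (fun i => L (f.2 i))))
      (by
        intro r f i h
        rw [Submodule.Quotient.mk_eq_zero]
        refine Submodule.smul_mem _ _ (tprod_mem_N π I n Y hk _ i ?_)
        rw [hL']; exact congrArg Subtype.val h)
      (by
        intro f
        rw [Submodule.Quotient.mk_eq_zero]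
        exact smul_tprod_mem_N π I n Y hk _ _ (hl 0))
      (by
        intro _ r f i a b
        simp only [comp_update]
        rw [← Submodule.Quotient.mk_add, ← smul_add, ← MultilinearMap.map_update_add]
        refine key _ _ (fun j => ?_) _ _ rfl
        by_cases h : j = i
        · subst h; simp [hL']
        · simp [h])
      (by
        intro r r' f
        rw [← Submodule.Quotient.mk_add, ← add_smul]
        exact key _ _ (fun _ => rfl) _ _ (by simp [hl]))
      (by
        intro _ r f i r'
        have : (l r' * l r) • tprod R (fun i => L (f i))
          = l r • tprod R (Function.update (fun i => L (f i)) i (l r' • L (f i))) := by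
          rw [MultilinearMap.map_update_smul, Function.update_eq_self, smul_smul, mul_comm]
        trans (Submodule.Quotient.mk ((l r' * l r) • tprod R (fun i => L (f i))))
        · rw [this]
          refine key _ _ (fun j => ?_) _ _ rfl
          by_cases h : j = i
          · subst h; simp [hL', hl]
          · simp [h]
        · exact key _ _ (fun _ => rfl) _ _ (by simp [hl]))
  have hψ : ∀ (s : S) (v : Fin (n+1) → ↥(I.map π)), ψ (s • tprod S v) = Submodule.Quotient.mk (l s • tprod R (fun i => L (v i))) := by
    intro s v
    rw [← tprodCoeff_eq_smul_tprod]; rfl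
  refine ⟨ψ, fun w => ?_⟩
  refine tp_induction w ?_ ?_
  · intro r v
    rw [Phi_smul_tprod, hψ]
    refine key _ _ (fun j => ?_) _ _ (hl _)
    rw [hL']; rfl
  · intro a b ha hb
    rw [map_add, map_add, ha, hb]; rfl

theorem Phi_ker (hπ : Function.Surjective π) (n : ℕ) (Y : ↥I)
    (hk : ∀ r, π r = 0 → ∃ a, r = a * (Y : R)) (hY : π Y = 0) (w : TensPow R I (n+1))
    (hw : Phi π I (n+1) w ∈ symRel S (I.map π) (n+1)) :
    ∃ w', w - consMap R I n Y w' ∈ symRel R I (n+1) := by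
  obtain ⟨ψ, hψ⟩ := exists_psi π I hπ n Y hk hY
  obtain ⟨s, hs, hsw⟩ := symRel_lift π I hπ _ _ hw
  have h1 := hψ w
  rw [← hsw, hψ s, Submodule.Quotient.eq] at h1
  have h2 : w ∈ Nsub I n Y := by
    have := sub_mem (Submodule.mem_sup_left hs : s ∈ Nsub I n Y) h1
    rwa [sub_sub_cancel] at this
  obtain ⟨a, ha, b, ⟨w', rfl⟩, rfl⟩ := Submodule.mem_sup.1 h2
  exact ⟨w', by simpa using ha⟩

end Basic
end Eff19

namespace Eff19
section Main
variable {R S : Type*} [CommRing R] [CommRing S]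

/-- span of the elements `x ⊗ w`, with `w` in the kernel of the product map -/
noncomputable def Dsub (I : Ideal R) (n : ℕ) : Submodule R (TensPow R I (n+1)) :=
  Submodule.span R {z | ∃ (x : ↥I) (w : TensPow R I n), tau I n w = 0 ∧ z = consMap R I n x w}

noncomputable def SK (I : Ideal R) (n : ℕ) : Submodule R (TensPow R I (n+1)) :=
  Dsub I n ⊔ symRel R I (n+1)

theorem symOneMulKer_eq (I : Ideal R) (n : ℕ) :
    symOneMulKer R I n = (Dsub I n).map (symRel R I (n+1)).mkQ := by
  rw [symOneMulKer, Dsub, Submodule.map_span]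
  congr 1
  ext z
  constructor
  · rintro ⟨x, w, hw, rfl⟩
    exact ⟨_, ⟨x, w, hw, rfl⟩, rfl⟩
  · rintro ⟨_, ⟨x, w, hw, rfl⟩, rfl⟩
    exact ⟨x, w, hw, rfl⟩

theorem mk_mem_symOneMulKer (I : Ideal R) (n : ℕ) (w : TensPow R I (n+1)) :
    (Submodule.Quotient.mk w : SymPow R I (n+1)) ∈ symOneMulKer R I n ↔ w ∈ SK I n := by
  have : SK I n = ((Dsub I n).map (symRel R I (n+1)).mkQ).comap (symRel R I (n+1)).mkQ := by
    rw [Submodule.comap_map_eq, Submodule.ker_mkQ]; rfl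
  rw [symOneMulKer_eq, this]; rfl

theorem tau_symRel (I : Ideal R) (n : ℕ) (w : TensPow R I n) (hw : w ∈ symRel R I n) :
    tau I n w = 0 := by
  rw [← alpha_mk, (Submodule.Quotient.mk_eq_zero _).2 hw, map_zero]

theorem tau_SK (I : Ideal R) (n : ℕ) (w : TensPow R I (n+1)) (hw : w ∈ SK I n) :
    tau I (n+1) w = 0 := by
  have : SK I n ≤ LinearMap.ker (tau I (n+1)) := by
    refine sup_le ?_ (fun w hw => tau_symRel I _ w hw)
    rw [Dsub, Submodule.span_le]
    rintro _ ⟨x, w, hw, rfl⟩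
    simp [tau_cons, hw]
  exact this hw

/-- class of a tensor in the module of effective relations -/
noncomputable def eMap (I : Ideal R) (n : ℕ) :
    LinearMap.ker (tau I (n+1)) →ₗ[R] EffRel R I n :=
  (Submodule.mkQ _).comp
    ((((symRel R I (n+1)).mkQ).comp (LinearMap.ker (tau I (n+1))).subtype).codRestrict
      (LinearMap.ker (alphaCan R I (n+1))) (fun w => w.2))

theorem eMap_surj (I : Ideal R) (n : ℕ) : Function.Surjective (eMap I n) := by
  intro z
  obtain ⟨⟨z, hz⟩, rfl⟩ := Submodule.mkQ_surjective _ z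
  obtain ⟨w, rfl⟩ := Submodule.mkQ_surjective _ z
  exact ⟨⟨w, hz⟩, rfl⟩

theorem eMap_eq_zero (I : Ideal R) (n : ℕ) (w : LinearMap.ker (tau I (n+1))) :
    eMap I n w = 0 ↔ (w : TensPow R I (n+1)) ∈ SK I n := by
  rw [← mk_mem_symOneMulKer]
  exact Submodule.Quotient.mk_eq_zero _

variable (π : R →+* S) (I : Ideal R)

theorem Phi_SK (n : ℕ) (w : TensPow R I (n+1)) (hw : w ∈ SK I n) :
    Phi π I (n+1) w ∈ SK (I.map π) n := by
  have : SK I n ≤ (SK (I.map π) n).comap (Phi π I (n+1)) := by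
    refine sup_le ?_ (fun w hw => Submodule.mem_sup_right (Phi_symRel π I _ w hw))
    rw [Dsub, Submodule.span_le]
    rintro _ ⟨x, w, hw, rfl⟩
    refine Submodule.mem_sup_left (Submodule.subset_span ⟨_, _, ?_, Phi_cons π I n x w⟩)
    rw [tau_Phi, hw, map_zero]
  exact this hw

theorem SK_lift (hπ : Function.Surjective π) (y : R) (hy : y ∈ I)
    (hk : ∀ r, π r = 0 ↔ r ∈ Ideal.span {y}) (m : ℕ)
    (hVV : Ideal.span {y} ⊓ I ^ (m+1) ≤ Ideal.span {y} * I ^ m)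
    (z : TensPow S (I.map π) (m+2)) (hz : z ∈ SK (I.map π) (m+1)) :
    ∃ w ∈ SK I (m+1), Phi π I (m+2) w = z := by
  have hy0 : π y = 0 := (hk y).2 (Ideal.mem_span_singleton_self y)
  obtain ⟨d, hd, s, hs, rfl⟩ := Submodule.mem_sup.1 hz
  obtain ⟨s', hs', rfl⟩ := symRel_lift π I hπ _ _ hs
  suffices h : ∃ w ∈ SK I (m+1), Phi π I (m+2) w = d by
    obtain ⟨w, hw, rfl⟩ := h
    exact ⟨w + s', add_mem hw (Submodule.mem_sup_right hs'), map_add _ _ _⟩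
  clear hz
  rw [Dsub] at hd
  induction hd using Submodule.span_induction with
  | mem x h =>
    obtain ⟨x, w, hw, rfl⟩ := h
    obtain ⟨x, rfl⟩ := resI_surj π I hπ x
    obtain ⟨w, rfl⟩ := Phi_surj π I hπ _ w
    rw [tau_Phi, hk] at hw
    obtain ⟨c, hc, hc'⟩ := Ideal.mem_span_singleton_mul.1 (hVV ⟨hw, tau_mem I _ w⟩)
    obtain ⟨u, rfl⟩ := tau_surj I m c hc
    refine ⟨consMap R I (m+1) x (w - consMap R I m ⟨y, hy⟩ u),
      Submodule.mem_sup_left (Submodule.subset_span ⟨_, _, ?_, rfl⟩), ?_⟩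
    · rw [map_sub, tau_cons, ← hc', sub_self]
    · rw [Phi_cons, map_sub, Phi_cons_zero π I m ⟨y, hy⟩ hy0, sub_zero]
  | zero => exact ⟨0, zero_mem _, map_zero _⟩
  | add a b _ _ ha hb =>
    obtain ⟨c, hc, rfl⟩ := ha
    obtain ⟨d, hd, rfl⟩ := hb
    exact ⟨c + d, add_mem hc hd, map_add _ _ _⟩
  | smul s a _ ha =>
    obtain ⟨c, hc, rfl⟩ := ha
    obtain ⟨r, rfl⟩ := hπ s
    exact ⟨r • c, Submodule.smul_mem _ _ hc, LinearMap.map_smulₛₗ _ _ _⟩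

theorem factor {A E F : Type*} [AddCommGroup A] [AddCommGroup E] [AddCommGroup F]
    [Module R A] [Module R E] [Module R F] (e : A →ₗ[R] E) (he : Function.Surjective e)
    (b : A →ₗ[R] F) (h : ∀ a, e a = 0 → b a = 0) : ∃ f : E →ₗ[R] F, ∀ a, f (e a) = b a := by
  refine ⟨((LinearMap.ker e).liftQ b (fun a ha => h a ha)).comp
    (e.quotKerEquivOfSurjective he).symm.toLinearMap, fun a => ?_⟩
  have : (e.quotKerEquivOfSurjective he).symm (e a) = Submodule.Quotient.mk a := by
    rw [LinearEquiv.symm_apply_eq]; rfl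
  rw [LinearMap.comp_apply, LinearEquiv.coe_coe, this]
  exact Submodule.liftQ_apply _ _ _

/-- tensors whose product maps to zero under `π` -/
noncomputable def Lsub (n : ℕ) : Submodule R (TensPow R I n) :=
  Submodule.comap (tau I n) (RingHom.ker π : Ideal R)

theorem mem_Lsub (n : ℕ) (w : TensPow R I n) : w ∈ Lsub π I n ↔ π (tau I n w) = 0 := Iff.rfl

theorem mainSES (hπ : Function.Surjective π) (y : R) (hy : y ∈ I)
    (hk : ∀ r, π r = 0 ↔ r ∈ Ideal.span {y}) (hann : ∀ r ∈ I, y * r = 0 → r = 0) (m : ℕ)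
    (hVV : Ideal.span {y} ⊓ I ^ (m+1) ≤ Ideal.span {y} * I ^ m) :
    letI : Module R (EffRel S (I.map π) (m+1)) := Module.compHom _ π
    ∃ (f : EffRel R I (m+1) →ₗ[R] EffRel S (I.map π) (m+1))
      (g : EffRel S (I.map π) (m+1) →ₗ[R] (vvCap y I (m+2) ⧸
              Submodule.comap (vvCap y I (m+2)).subtype (Ideal.span {y} * I ^ (m+1)))),
      Function.Injective f ∧ Function.Surjective g ∧ Function.Exact f g := by
  letI inst : Module R (EffRel S (I.map π) (m+1)) := Module.compHom _ π
  have hy0 : π y = 0 := (hk y).2 (Ideal.mem_span_singleton_self y)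
  have hk' : ∀ r, π r = 0 → ∃ a, r = a * ((⟨y, hy⟩ : ↥I) : R) := by
    intro r hr
    obtain ⟨a, ha⟩ := Ideal.mem_span_singleton'.1 ((hk r).1 hr)
    exact ⟨a, ha.symm⟩
  have hLJ : ∀ w ∈ Lsub π I (m+2), Phi π I (m+2) w ∈ LinearMap.ker (tau (I.map π) (m+2)) := by
    intro w hw
    rw [LinearMap.mem_ker, tau_Phi]; exact hw
  let b : Lsub π I (m+2) →ₗ[R] EffRel S (I.map π) (m+1) :=
    { toFun := fun w => eMap (I.map π) (m+1) ⟨Phi π I (m+2) w, hLJ w w.2⟩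
      map_add' := by
        intro w w'
        rw [← map_add]
        congr 1
        ext
        exact map_add _ _ _
      map_smul' := by
        intro r w
        change _ = π r • eMap (I.map π) (m+1) ⟨Phi π I (m+2) w, hLJ w w.2⟩
        rw [← map_smul]
        congr 1
        ext
        exact LinearMap.map_smulₛₗ _ _ _ }
  have hb : ∀ w, b w = eMap (I.map π) (m+1) ⟨Phi π I (m+2) w, hLJ w w.2⟩ := fun _ => rfl
  have hbsurj : Function.Surjective b := by
    intro z
    obtain ⟨⟨z, hz⟩, rfl⟩ := eMap_surj _ _ z
    obtain ⟨w, rfl⟩ := Phi_surj π I hπ _ z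
    refine ⟨⟨w, ?_⟩, rfl⟩
    rw [LinearMap.mem_ker, tau_Phi] at hz
    exact hz
  have hb0 : ∀ w, b w = 0 → ∃ s ∈ SK I (m+1), ∃ u,
      (w : TensPow R I (m+2)) - (s + consMap R I (m+1) ⟨y, hy⟩ u) ∈ symRel R I (m+2) := by
    intro w hw
    rw [hb, eMap_eq_zero] at hw
    obtain ⟨s, hs, hsw⟩ := SK_lift π I hπ y hy hk m hVV _ hw
    obtain ⟨u, hu⟩ := Phi_ker π I hπ (m+1) ⟨y, hy⟩ hk' hy0 (w - s) (by
      rw [map_sub, hsw, sub_self]; exact zero_mem _)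
    exact ⟨s, hs, u, by rwa [← sub_sub]⟩
  let a0 : Lsub π I (m+2) →ₗ[R] vvCap y I (m+2) :=
    ((tau I (m+2)).comp (Lsub π I (m+2)).subtype).codRestrict (vvCap y I (m+2))
      (fun w => ⟨(hk _).1 w.2, tau_mem I _ _⟩)
  let a := (Submodule.mkQ (Submodule.comap (vvCap y I (m+2)).subtype
    (Ideal.span {y} * I ^ (m+1)))).comp a0
  have ha0 : ∀ w, a w = 0 ↔ tau I (m+2) w ∈ Ideal.span {y} * I ^ (m+1) := by
    intro w
    exact Submodule.Quotient.mk_eq_zero _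
  have hasurj : Function.Surjective a := by
    refine (Submodule.mkQ_surjective _).comp ?_
    rintro ⟨r, hr1, hr2⟩
    obtain ⟨w, hw⟩ := tau_surj I _ r hr2
    exact ⟨⟨w, (hk _).2 (hw ▸ hr1)⟩, Subtype.ext hw⟩
  have hKL : LinearMap.ker (tau I (m+2)) ≤ Lsub π I (m+2) := by
    intro w hw
    rw [mem_Lsub, LinearMap.mem_ker.1 hw, map_zero]
  have hfac : ∀ w, eMap I (m+1) w = 0 → (b.comp (Submodule.inclusion hKL)) w = 0 := by
    intro w hw
    rw [eMap_eq_zero] at hw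
    rw [LinearMap.comp_apply, hb, eMap_eq_zero]
    exact Phi_SK π I _ _ hw
  obtain ⟨f, hf⟩ := factor (R := R) (A := LinearMap.ker (tau I (m+2)))
    (E := EffRel R I (m+1)) (F := EffRel S (I.map π) (m+1)) (eMap I (m+1)) (eMap_surj I (m+1))
    (b.comp (Submodule.inclusion hKL)) hfac
  obtain ⟨g, hg⟩ := factor (R := R) (A := Lsub π I (m+2))
    (E := EffRel S (I.map π) (m+1)) (F := vvCap y I (m+2) ⧸
      Submodule.comap (vvCap y I (m+2)).subtype (Ideal.span {y} * I ^ (m+1))) b hbsurj a (by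
    intro w hw
    obtain ⟨s, hs, u, hu⟩ := hb0 w hw
    rw [ha0]
    have := tau_symRel I _ _ hu
    rw [map_sub, map_add, tau_SK I _ s hs, zero_add, tau_cons, sub_eq_zero] at this
    rw [this]
    exact Ideal.mul_mem_mul (Ideal.mem_span_singleton_self y) (tau_mem I _ u))
  refine ⟨f, g, ?_, ?_, ?_⟩
  · rw [injective_iff_map_eq_zero]
    intro z hz
    obtain ⟨w, rfl⟩ := eMap_surj _ _ z
    rw [hf] at hz
    obtain ⟨s, hs, u, hu⟩ := hb0 _ hz
    have h1 := tau_symRel I _ _ hu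
    have h2 : tau I (m+2) (w : TensPow R I (m+2)) = 0 := w.2
    rw [map_sub, map_add, tau_SK I _ s hs, zero_add, tau_cons, Submodule.coe_inclusion, h2,
      zero_sub, neg_eq_zero] at h1
    have h3 : tau I (m+1) u = 0 :=
      hann _ (Ideal.pow_le_self (Nat.succ_ne_zero m) (tau_mem I _ u)) h1
    rw [eMap_eq_zero]
    have h4 : consMap R I (m+1) ⟨y, hy⟩ u ∈ SK I (m+1) :=
      Submodule.mem_sup_left (Submodule.subset_span ⟨_, _, h3, rfl⟩)
    have h5 := add_mem (Submodule.mem_sup_right hu : _ ∈ SK I (m+1)) (add_mem hs h4)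
    rwa [sub_add_cancel] at h5
  · intro v
    obtain ⟨w, rfl⟩ := hasurj v
    exact ⟨b w, hg w⟩
  · intro z
    constructor
    · intro hz
      obtain ⟨w, rfl⟩ := hbsurj z
      rw [hg, ha0] at hz
      obtain ⟨c, hc, hc'⟩ := Ideal.mem_span_singleton_mul.1 hz
      obtain ⟨u, rfl⟩ := tau_surj I _ c hc
      have hu : consMap R I (m+1) ⟨y, hy⟩ u ∈ Lsub π I (m+2) := by
        rw [mem_Lsub, tau_cons, map_mul, hy0, zero_mul]
      have hw' : (w : TensPow R I (m+2)) - consMap R I (m+1) ⟨y, hy⟩ u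
          ∈ LinearMap.ker (tau I (m+2)) := by
        rw [LinearMap.mem_ker, map_sub, tau_cons, ← hc', sub_self]
      refine ⟨eMap I (m+1) ⟨_, hw'⟩, ?_⟩
      rw [hf, LinearMap.comp_apply, hb, hb]
      congr 1
      ext
      change Phi π I (m+2) ((w : TensPow R I (m+2)) - consMap R I (m+1) ⟨y, hy⟩ u) =
        Phi π I (m+2) w
      rw [map_sub, Phi_cons_zero π I (m+1) ⟨y, hy⟩ hy0, sub_zero]
    · rintro ⟨e, rfl⟩
      obtain ⟨w, rfl⟩ := eMap_surj _ _ e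
      rw [hf, LinearMap.comp_apply, hg, ha0]
      have h2 : tau I (m+2) (w : TensPow R I (m+2)) = 0 := w.2
      rw [Submodule.coe_inclusion, h2]
      exact zero_mem _

end Main

section Gr
variable {R : Type*} [CommRing R]

theorem coeff_grIdeal (I : Ideal R) (f : reesAlgebra I) (hf : f ∈ grIdeal I) :
    ∀ i, (f : Polynomial R).coeff i ∈ I ^ (i+1) := by
  rw [grIdeal] at hf
  induction hf using Submodule.span_induction with
  | mem x h =>
    intro i
    obtain ⟨r, hr, rfl⟩ := h
    change (Polynomial.C r).coeff i ∈ _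
    rw [Polynomial.coeff_C]
    split_ifs with h
    · subst h; simpa using hr
    · exact zero_mem _
  | zero => simp
  | add a b _ _ ha hb => intro i; simpa using add_mem (ha i) (hb i)
  | smul s a _ ha =>
    intro i
    change ((s : Polynomial R) * (a : Polynomial R)).coeff i ∈ _
    rw [Polynomial.coeff_mul]
    refine Submodule.sum_mem _ (fun jk hjk => ?_)
    have h := Ideal.mul_mem_mul ((mem_reesAlgebra_iff I _).1 s.2 jk.1) (ha jk.2)
    rwa [← pow_add, ← add_assoc, Finset.HasAntidiagonal.mem_antidiagonal.1 hjk] at h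

theorem monomial_grIdeal (I : Ideal R) (k : ℕ) (r : R) (hr : r ∈ I ^ (k+1)) :
    ∃ f ∈ grIdeal I, (f : Polynomial R) = Polynomial.monomial k r := by
  rw [pow_succ'] at hr
  refine Submodule.mul_induction_on hr ?_ ?_
  · intro a ha b hb
    refine ⟨algebraMap R (reesAlgebra I) a *
        ⟨Polynomial.monomial k b, reesAlgebra.monomial_mem.2 hb⟩,
        Ideal.mul_mem_right _ _ (Ideal.subset_span ⟨a, ha, rfl⟩), ?_⟩
    change Polynomial.C a * Polynomial.monomial k b = _
    rw [Polynomial.C_mul_monomial]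
  · rintro a b ⟨f, hf, hf'⟩ ⟨g, hg, hg'⟩
    refine ⟨f + g, add_mem hf hg, ?_⟩
    rw [map_add, ← hf', ← hg']; rfl

theorem colon_of_regular (I : Ideal R) (y : R) (ξ : reesAlgebra I)
    (hξ : (ξ : Polynomial R) = Polynomial.C y * Polynomial.X)
    (hreg : ∀ z : GrRing I, Ideal.Quotient.mk (grIdeal I) ξ * z = 0 → z = 0) (k : ℕ) :
    ∀ r, y * r ∈ I ^ (k+1) → r ∈ I ^ k := by
  induction k with
  | zero => intro r _; simp
  | succ k ih =>
    intro r hr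
    have h1 : r ∈ I ^ k := ih r (Ideal.pow_le_pow_right (by omega) hr)
    let ρ : reesAlgebra I := ⟨Polynomial.monomial k r, reesAlgebra.monomial_mem.2 h1⟩
    obtain ⟨f, hf, hf'⟩ := monomial_grIdeal I (k+1) (y * r) hr
    have h2 : ξ * ρ = f := by
      apply Subtype.ext
      rw [hf']
      change (ξ : Polynomial R) * Polynomial.monomial k r = _
      rw [hξ, mul_assoc, Polynomial.X_mul_monomial, Polynomial.C_mul_monomial]
    have h3 := hreg (Ideal.Quotient.mk (grIdeal I) ρ) (by
      rw [← map_mul, h2, Ideal.Quotient.eq_zero_iff_mem]; exact hf)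
    rw [Ideal.Quotient.eq_zero_iff_mem] at h3
    have h4 := coeff_grIdeal I ρ h3 k
    have h5 : (ρ : Polynomial R).coeff k = r := Polynomial.coeff_monomial_same k r
    rwa [h5] at h4

theorem VV_of_regular (I : Ideal R) (y : R) (hy : y ∈ I) (ξ : reesAlgebra I)
    (hξ : (ξ : Polynomial R) = Polynomial.C y * Polynomial.X)
    (hreg : ∀ z : GrRing I, Ideal.Quotient.mk (grIdeal I) ξ * z = 0 → z = 0) (k : ℕ) :
    Ideal.span {y} ⊓ I ^ (k+1) = Ideal.span {y} * I ^ k := by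
  apply le_antisymm
  · rintro x ⟨hx1, hx2⟩
    obtain ⟨r, rfl⟩ := Ideal.mem_span_singleton.1 hx1
    exact Ideal.mul_mem_mul (Ideal.mem_span_singleton_self y)
      (colon_of_regular I y ξ hξ hreg k r hx2)
  · refine le_inf Ideal.mul_le_left ?_
    rw [pow_succ']
    exact Ideal.mul_mono_left ((Ideal.span_singleton_le_iff_mem I).2 hy)

end Gr
end Eff19

/-- Let `R` be Noetherian, `y ∈ I \ I²` with `(0 : y) ∩ I = 0`.  If the
Valabrega–Valla module `VV_{(y)}(I)_{p-1} = ((y) ∩ Iᵖ⁻¹)/(yIᵖ⁻²)` vanishes for some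
`p ≥ 2`, then there is a short exact sequence of `R`-modules
`0 → E(I)_p → E(I/(y))_p → ((y) ∩ Iᵖ)/(yIᵖ⁻¹) → 0`.
In particular, if the initial form `y*` is `gr_I(R)`-regular, then
`E(I)_p ≅ E(I/(y))_p` for all `p ≥ 2` and `rt(I) = rt(I/(y))`
(here `EffRel R I (p-1) = E(I)_p`, and the relation type is encoded through the
set of `N ≥ 1` such that `E(I)_k = 0` for all `k ≥ N + 1`). -/
theorem statement19 {R : Type*} [CommRing R] [IsNoetherianRing R]
    (I : Ideal R) (y : R) (hy : y ∈ I) (hy2 : y ∉ I ^ 2)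
    (hann : (⊥ : Ideal R).colon (Ideal.span {y}) ⊓ I = ⊥) :
    (∀ p, 2 ≤ p →
      Ideal.span {y} ⊓ I ^ (p - 1) = Ideal.span {y} * I ^ (p - 2) →
      letI : Module R (EffRel (R ⧸ Ideal.span {y})
          (Ideal.map (Ideal.Quotient.mk (Ideal.span {y})) I) (p - 1)) :=
        Module.compHom _ (Ideal.Quotient.mk (Ideal.span {y}))
      ∃ (f : EffRel R I (p - 1) →ₗ[R]
            EffRel (R ⧸ Ideal.span {y}) (Ideal.map (Ideal.Quotient.mk (Ideal.span {y})) I) (p - 1))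
        (g : EffRel (R ⧸ Ideal.span {y}) (Ideal.map (Ideal.Quotient.mk (Ideal.span {y})) I) (p - 1)
            →ₗ[R] (vvCap y I p ⧸
              Submodule.comap (vvCap y I p).subtype
                (Ideal.span {y} * I ^ (p - 1)))),
        Function.Injective f ∧ Function.Surjective g ∧ Function.Exact f g) ∧
    (∀ ξ : reesAlgebra I, (ξ : Polynomial R) = Polynomial.C y * Polynomial.X →
      (∀ z : GrRing I, Ideal.Quotient.mk (grIdeal I) ξ * z = 0 → z = 0) →
      (∀ p, 2 ≤ p →
        letI : Module R (EffRel (R ⧸ Ideal.span {y})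
            (Ideal.map (Ideal.Quotient.mk (Ideal.span {y})) I) (p - 1)) :=
          Module.compHom _ (Ideal.Quotient.mk (Ideal.span {y}))
        Nonempty (EffRel R I (p - 1) ≃ₗ[R]
          EffRel (R ⧸ Ideal.span {y}) (Ideal.map (Ideal.Quotient.mk (Ideal.span {y})) I) (p - 1))) ∧
      {N : ℕ | 1 ≤ N ∧ ∀ k, N + 1 ≤ k → Subsingleton (EffRel R I (k - 1))}
        = {N : ℕ | 1 ≤ N ∧ ∀ k, N + 1 ≤ k →
            Subsingleton (EffRel (R ⧸ Ideal.span {y})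
              (Ideal.map (Ideal.Quotient.mk (Ideal.span {y})) I) (k - 1))}) := by
  have hann' : ∀ r ∈ I, y * r = 0 → r = 0 := by
    intro r hr h
    have : r ∈ (⊥ : Ideal R).colon (Ideal.span {y}) ⊓ I := by
      refine ⟨?_, hr⟩
      rw [SetLike.mem_coe, Submodule.mem_colon]
      intro s hs
      obtain ⟨a, rfl⟩ := Ideal.mem_span_singleton.1 hs
      rw [Submodule.mem_bot, smul_eq_mul, ← mul_assoc, mul_comm r y, h, zero_mul]
    rw [hann] at this
    exact this
  have hSES := fun m hVV => Eff19.mainSES (Ideal.Quotient.mk (Ideal.span {y})) I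
    Ideal.Quotient.mk_surjective y hy (fun r => Ideal.Quotient.eq_zero_iff_mem) hann' m hVV
  refine ⟨?_, ?_⟩
  · intro p hp hVV
    obtain ⟨m, rfl⟩ : ∃ m, p = m + 2 := ⟨p - 2, by omega⟩
    exact hSES m hVV.le
  · intro ξ hξ hreg
    have hV := Eff19.VV_of_regular I y hy ξ hξ hreg
    have key : ∀ p, 2 ≤ p →
        letI : Module R (EffRel (R ⧸ Ideal.span {y})
            (Ideal.map (Ideal.Quotient.mk (Ideal.span {y})) I) (p - 1)) :=
          Module.compHom _ (Ideal.Quotient.mk (Ideal.span {y}))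
        Nonempty (EffRel R I (p - 1) ≃ₗ[R]
          EffRel (R ⧸ Ideal.span {y})
            (Ideal.map (Ideal.Quotient.mk (Ideal.span {y})) I) (p - 1)) := by
      intro p hp
      obtain ⟨m, rfl⟩ : ∃ m, p = m + 2 := ⟨p - 2, by omega⟩
      letI : Module R (EffRel (R ⧸ Ideal.span {y})
            (Ideal.map (Ideal.Quotient.mk (Ideal.span {y})) I) (m + 1)) :=
          Module.compHom _ (Ideal.Quotient.mk (Ideal.span {y}))
      obtain ⟨f, g, hf, -, hfg⟩ := hSES m (hV m).le
      refine ⟨LinearEquiv.ofBijective f ⟨hf, fun z => (hfg z).1 ?_⟩⟩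
      obtain ⟨v, hv⟩ := Submodule.mkQ_surjective _ (g z)
      rw [← hv]
      refine (Submodule.Quotient.mk_eq_zero _).2 ?_
      have h2 : (v : R) ∈ Ideal.span {y} ⊓ I ^ (m + 1 + 1) := v.2
      rw [hV (m + 1)] at h2
      exact h2
    refine ⟨key, ?_⟩
    ext N
    refine and_congr_right (fun hN => forall_congr' fun k => forall_congr' fun hk => ?_)
    obtain ⟨e⟩ := key k (by omega)
    exact e.toEquiv.subsingleton_congr
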